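/- arXiv:1310.8110 — 5 statements merged into one kernel-verified Lean document; each statement's English description precedes it below -/
import Mathlib

section
/- Let p ≥ 1 be an integer, q = p + 1, let Σ be a symmetric positive definite p × p real matrix, and let 0 < b < q. Then for every x ∈ ℝ^p, exp(−(1/2)·xᵀΣ⁻¹x) ≤ exp(−(q − b)/2) · (q/b)^{q/2} · (1 + xᵀ(bΣ)⁻¹x)^{−q/2}. That is, the unnormalized multivariate normal density with covariance Σ is dominated by exp(−(q−b)/2)(q/b)^{q/2} times the unnormalized multivariate Cauchy density with scatter matrix Ψ = bΣ. -/
open Matrix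

/-- the unnormalized `N_p(0, Σ)` density is dominated by
`exp(−(q−b)/2)(q/b)^(q/2)` times the unnormalized multivariate Cauchy density with
scatter matrix `Ψ = bS`, where `q = p + 1` and `0 < b < q`. -/
theorem stmt_2 (p : ℕ) (hp : 1 ≤ p) (q : ℝ) (hq : q = p + 1)
    (S : Matrix (Fin p) (Fin p) ℝ) (hSsymm : S.IsSymm) (hS : S.PosDef)
    (b : ℝ) (hb : 0 < b) (hbq : b < q) :
    ∀ x : Fin p → ℝ,
      Real.exp (-(1 / 2 * (x ⬝ᵥ S⁻¹.mulVec x))) ≤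
        Real.exp (-(q - b) / 2) * (q / b) ^ (q / 2) *
          (1 + x ⬝ᵥ (b • S)⁻¹.mulVec x) ^ (-(q / 2)) := by
  intro x
  have ht : 0 ≤ x ⬝ᵥ S⁻¹.mulVec x := by
    have h := hS.inv.posSemidef.dotProduct_mulVec_nonneg x
    simpa using h
  have hdet : IsUnit S.det := hS.det_pos.ne'.isUnit
  have hinv : (b • S)⁻¹ = b⁻¹ • S⁻¹ := by
    apply Matrix.inv_eq_left_inv
    rw [Matrix.smul_mul, Matrix.mul_smul, smul_smul, Matrix.nonsing_inv_mul S hdet,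
      inv_mul_cancel₀ hb.ne', one_smul]
  rw [hinv, Matrix.smul_mulVec, dotProduct_smul, smul_eq_mul]
  generalize x ⬝ᵥ S⁻¹.mulVec x = t at ht
  have hq0 : 0 < q := hb.trans hbq
  have h1 : 0 < 1 + b⁻¹ * t := by positivity
  have hbt : 0 < b + t := by positivity
  rw [Real.rpow_def_of_pos (div_pos hq0 hb), Real.rpow_def_of_pos h1, ← Real.exp_add,
    ← Real.exp_add, Real.exp_le_exp]
  have e : 1 + b⁻¹ * t = (b + t) / b := by field_simp
  rw [e, Real.log_div hq0.ne' hb.ne', Real.log_div hbt.ne' hb.ne']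
  have h := Real.log_le_sub_one_of_pos (div_pos hbt hq0)
  rw [Real.log_div hbt.ne' hq0.ne'] at h
  have h2 := mul_le_mul_of_nonneg_left h hq0.le
  have e2 : q * ((b + t) / q - 1) = b + t - q := by field_simp
  rw [e2] at h2
  linarith
end

section
/- Let q ≥ 2 be an integer, let A be a symmetric positive semidefinite q × q real matrix, let 0 < b < q, and set Ω = I_q + (2/b)·A. Then for every unit vector x ∈ ℝ^q (i.e. xᵀx = 1), exp(−xᵀAx) ≤ exp(−(q − b)/2)·(q/b)^{q/2}·(xᵀΩx)^{−q/2}. That is, the unnormalized Bingham density with parameter matrix A is dominated on the unit sphere by exp(−(q−b)/2)(q/b)^{q/2} times the unnormalized angular central Gaussian density with parameter matrix Ω. -/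
open Matrix

/-- the unnormalized Bingham density `exp(−xᵀAx)` on the unit sphere is
dominated by `exp(−(q−b)/2)(q/b)^(q/2)` times the unnormalized angular central Gaussian
density `(xᵀΩx)^(−q/2)` with `Ω = I + (2/b)A`, for `0 < b < q`. -/
theorem stmt_5 (q : ℕ) (hq : 2 ≤ q) (A : Matrix (Fin q) (Fin q) ℝ)
    (hA : A.PosSemidef) (b : ℝ) (hb : 0 < b) (hbq : b < q)
    (Ω : Matrix (Fin q) (Fin q) ℝ) (hΩ : Ω = 1 + (2 / b) • A) :
    ∀ x : Fin q → ℝ, x ⬝ᵥ x = 1 →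
      Real.exp (-(x ⬝ᵥ A.mulVec x)) ≤
        Real.exp (-((q : ℝ) - b) / 2) * ((q : ℝ) / b) ^ ((q : ℝ) / 2) *
          (x ⬝ᵥ Ω.mulVec x) ^ (-((q : ℝ) / 2)) := by
  intro x hx
  have ht : 0 ≤ x ⬝ᵥ A.mulVec x := by
    simpa using hA.dotProduct_mulVec_nonneg x
  have hw : x ⬝ᵥ Ω.mulVec x = 1 + 2 / b * (x ⬝ᵥ A.mulVec x) := by
    rw [hΩ, Matrix.add_mulVec, Matrix.one_mulVec, Matrix.smul_mulVec, dotProduct_add, hx,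
      dotProduct_smul, smul_eq_mul]
  rw [hw]
  generalize x ⬝ᵥ A.mulVec x = t at ht
  have hq0 : (0 : ℝ) < q := hb.trans hbq
  have hwp : 0 < 1 + 2 / b * t := by positivity
  have hqb : 0 < (q : ℝ) / b := by positivity
  rw [Real.rpow_def_of_pos hwp, Real.rpow_def_of_pos hqb, ← Real.exp_add, ← Real.exp_add,
    Real.exp_le_exp]
  have key := Real.log_le_sub_one_of_pos (div_pos hwp hqb)
  rw [Real.log_div hwp.ne' hqb.ne'] at key
  have h2 := mul_le_mul_of_nonneg_left key (by positivity : 0 ≤ (q : ℝ) / 2)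
  have h3 : (q : ℝ) / 2 * ((1 + 2 / b * t) / (q / b) - 1) = t - (q - b) / 2 := by
    field_simp
    ring
  rw [h3] at h2
  linarith
end

section
/- Let 1 ≤ r ≤ q be integers, let A be a symmetric positive semidefinite q × q real matrix, let 0 < b < q, and set Ω = I_q + (2/b)·A. Then for every q × r real matrix X with orthonormal columns (XᵀX = I_r), exp(−tr(XᵀAX)) ≤ [exp(−(q − b)/2)·(q/b)^{q/2}]^r · det(XᵀΩX)^{−q/2}, where moreover det(XᵀΩX) = det(I_r + (2/b)·XᵀAX). That is, the unnormalized balanced matrix Bingham density on the Stiefel manifold V_{r,q} is dominated by the r-th power of the scalar Bingham–ACG bound times the unnormalized matrix angular central Gaussian density with parameter Ω. -/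
open Matrix

theorem scalar_bound (q b m : ℝ) (hb : 0 < b) (hq : 0 < q) (hm : 0 < m) :
    Real.exp (-(b / 2 * (m - 1))) ≤
      Real.exp (-(q - b) / 2) * (q / b) ^ (q / 2) * m ^ (-(q / 2)) := by
  have hqb : 0 < q / b := div_pos hq hb
  rw [Real.rpow_def_of_pos hqb, Real.rpow_def_of_pos hm, ← Real.exp_add, ← Real.exp_add]
  apply Real.exp_le_exp.mpr
  have h := Real.log_le_sub_one_of_pos (show 0 < m / (q / b) by positivity)
  rw [Real.log_div hm.ne' hqb.ne'] at h
  have h2 : q / 2 * (Real.log m - Real.log (q / b)) ≤ q / 2 * (m / (q / b) - 1) :=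
    mul_le_mul_of_nonneg_left h (by positivity)
  have h3 : q / 2 * (m / (q / b) - 1) = b / 2 * m - q / 2 := by
    field_simp
  rw [h3] at h2
  nlinarith

/-- the unnormalized balanced matrix Bingham density
`exp(−tr(XᵀAX))` on the Stiefel manifold `V_{r,q}` is dominated by the `r`-th power of
the scalar Bingham–ACG bound times the unnormalized matrix angular central Gaussian
density `det(XᵀΩX)^(−q/2)`, with `Ω = I + (2/b)A`; moreover
`det(XᵀΩX) = det(I_r + (2/b) XᵀAX)`. -/
theorem stmt_10 (r q : ℕ) (hr : 1 ≤ r) (hrq : r ≤ q)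
    (A : Matrix (Fin q) (Fin q) ℝ) (hA : A.PosSemidef)
    (b : ℝ) (hb : 0 < b) (hbq : b < q)
    (Ω : Matrix (Fin q) (Fin q) ℝ) (hΩ : Ω = 1 + (2 / b) • A) :
    ∀ X : Matrix (Fin q) (Fin r) ℝ, Xᵀ * X = 1 →
      Real.exp (-(Xᵀ * A * X).trace) ≤
        (Real.exp (-((q : ℝ) - b) / 2) * ((q : ℝ) / b) ^ ((q : ℝ) / 2)) ^ r *
          (Xᵀ * Ω * X).det ^ (-((q : ℝ) / 2)) ∧
      (Xᵀ * Ω * X).det = ((1 : Matrix (Fin r) (Fin r) ℝ) + (2 / b) • (Xᵀ * A * X)).det := by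
  intro X hX
  have hM : Xᵀ * Ω * X = (1 : Matrix (Fin r) (Fin r) ℝ) + (2 / b) • (Xᵀ * A * X) := by
    rw [hΩ, Matrix.mul_add, Matrix.add_mul, Matrix.mul_one, hX, Matrix.mul_smul, Matrix.smul_mul]
  refine ⟨?_, by rw [hM]⟩
  have hB : (Xᵀ * A * X).PosSemidef := by
    simpa using hA.conjTranspose_mul_mul_same X
  have hP : (Xᵀ * Ω * X).PosDef := by
    rw [hM]
    exact Matrix.PosDef.one.add_posSemidef (hB.smul (by positivity))
  have htr : (Xᵀ * A * X).trace = ∑ i, b / 2 * (hP.1.eigenvalues i - 1) := by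
    have h1 := hP.1.trace_eq_sum_eigenvalues
    have h2 := congrArg Matrix.trace hM
    rw [Matrix.trace_add, Matrix.trace_smul, Matrix.trace_one, h1] at h2
    simp only [RCLike.ofReal_real_eq_id, id, smul_eq_mul, Fintype.card_fin] at h2
    rw [← Finset.mul_sum, Finset.sum_sub_distrib, h2]
    simp
    field_simp
  have hdet : (Xᵀ * Ω * X).det = ∏ i, hP.1.eigenvalues i := by
    simpa using hP.1.det_eq_prod_eigenvalues
  rw [htr, hdet, ← Finset.sum_neg_distrib, Real.exp_sum,
    ← Real.finsetProd_rpow _ _ (fun i _ => (hP.eigenvalues_pos i).le)]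
  calc _ ≤ ∏ i, (Real.exp (-((q : ℝ) - b) / 2) * ((q : ℝ) / b) ^ ((q : ℝ) / 2) *
        hP.1.eigenvalues i ^ (-((q : ℝ) / 2))) :=
        Finset.prod_le_prod (fun i _ => (Real.exp_pos _).le)
          (fun i _ => scalar_bound q b _ hb (hb.trans hbq) (hP.eigenvalues_pos i))
    _ = _ := by
        rw [Finset.prod_mul_distrib, Finset.prod_const, Finset.card_univ, Fintype.card_fin]
end

section
/- Let x = (x₁, x₂, x₃, x₄)ᵀ ∈ ℝ⁴ be a unit vector, let M(x) be the 3 × 3 rotation matrix with rows (x₁²+x₂²−x₃²−x₄², −2(x₁x₄−x₂x₃), 2(x₁x₃+x₂x₄)); (2(x₁x₄+x₂x₃), x₁²+x₃²−x₂²−x₄², −2(x₁x₂−x₃x₄)); (−2(x₁x₃−x₂x₄), 2(x₁x₂+x₃x₄), x₁²+x₄²−x₂²−x₃²), let Δ = diag(δ₁, δ₂, δ₃), and let Λ = diag(0, 2(δ₂+δ₃), 2(δ₁+δ₃), 2(δ₁+δ₂)). Then tr(ΔᵀM(x)) = (δ₁ + δ₂ + δ₃) − xᵀΛx. Consequently,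 the unnormalized matrix Fisher density exp(tr(ΔᵀM(x))) on SO(3) equals exp(δ₁+δ₂+δ₃) times the unnormalized Bingham density exp(−xᵀΛx) on S₃. -/
open Matrix

/-- The quadratic map from a unit vector `x ∈ ℝ⁴` to a `3 × 3` rotation matrix
implementing the accidental isomorphism `ℝP₃ = SO(3)`. -/
def quatToMatrix (x₁ x₂ x₃ x₄ : ℝ) : Matrix (Fin 3) (Fin 3) ℝ :=
  !![x₁^2 + x₂^2 - x₃^2 - x₄^2, -2*(x₁*x₄ - x₂*x₃), 2*(x₁*x₃ + x₂*x₄);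
     2*(x₁*x₄ + x₂*x₃), x₁^2 + x₃^2 - x₂^2 - x₄^2, -2*(x₁*x₂ - x₃*x₄);
     -2*(x₁*x₃ - x₂*x₄), 2*(x₁*x₂ + x₃*x₄), x₁^2 + x₄^2 - x₂^2 - x₃^2]

/-- with `Δ = diag(δ₁, δ₂, δ₃)` and
`Λ = diag(0, 2(δ₂+δ₃), 2(δ₁+δ₃), 2(δ₁+δ₂))`, for any unit vector `x ∈ ℝ⁴` one has
`tr(Δᵀ M(x)) = (δ₁+δ₂+δ₃) − xᵀΛx`; hence the unnormalized matrix Fisher density on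
`SO(3)` equals `exp(δ₁+δ₂+δ₃)` times the unnormalized Bingham density on `S₃`. -/
theorem stmt_13 (x₁ x₂ x₃ x₄ : ℝ) (hx : x₁^2 + x₂^2 + x₃^2 + x₄^2 = 1)
    (δ₁ δ₂ δ₃ : ℝ)
    (Δ : Matrix (Fin 3) (Fin 3) ℝ) (hΔ : Δ = Matrix.diagonal ![δ₁, δ₂, δ₃])
    (Λ : Matrix (Fin 4) (Fin 4) ℝ)
    (hΛ : Λ = Matrix.diagonal ![0, 2*(δ₂+δ₃), 2*(δ₁+δ₃), 2*(δ₁+δ₂)])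
    (x : Fin 4 → ℝ) (hxv : x = ![x₁, x₂, x₃, x₄]) :
    (Δᵀ * quatToMatrix x₁ x₂ x₃ x₄).trace = (δ₁ + δ₂ + δ₃) - x ⬝ᵥ Λ.mulVec x ∧
    Real.exp ((Δᵀ * quatToMatrix x₁ x₂ x₃ x₄).trace) =
      Real.exp (δ₁ + δ₂ + δ₃) * Real.exp (-(x ⬝ᵥ Λ.mulVec x)) := by
  have h : (Δᵀ * quatToMatrix x₁ x₂ x₃ x₄).trace =
      (δ₁ + δ₂ + δ₃) - x ⬝ᵥ Λ.mulVec x := by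
    subst hΔ hΛ hxv
    simp only [Matrix.diagonal_transpose, Matrix.trace, Matrix.diag, Matrix.diagonal_mul,
      dotProduct, Matrix.mulVec_diagonal, Fin.sum_univ_three, Fin.sum_univ_four]
    simp [quatToMatrix]
    linear_combination (δ₁ + δ₂ + δ₃) * hx
  refine ⟨h, ?_⟩
  rw [h, ← Real.exp_add, sub_eq_add_neg]
end

section
/- Let q ≥ 2 be an integer and let Ω be a symmetric positive definite q × q real matrix. Then the integral of (xᵀΩx)^{−q/2} over the unit sphere S_{q−1} ⊂ ℝ^q with respect to the uniform probability measure equals (det Ω)^{−1/2}. Equivalently, the angular central Gaussian density f(x) = (det Ω)^{1/2}·(xᵀΩx)^{−q/2}, taken with respect to the uniform distribution on S_{q−1}, integrates to 1. -/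
open Matrix MeasureTheory Metric


section
variable {q : ℕ}

open scoped MatrixOrder in
lemma acg_exists (Ω : Matrix (Fin q) (Fin q) ℝ) (hΩ : Ω.PosDef) :
    ∃ B : Matrix (Fin q) (Fin q) ℝ, Ω = Bᵀ * B := by
  obtain ⟨B, hB⟩ := CStarAlgebra.nonneg_iff_eq_star_mul_self.mp hΩ.posSemidef.nonneg
  exact ⟨B, by simpa [star_eq_conjTranspose] using hB⟩

lemma acg_norm (B : Matrix (Fin q) (Fin q) ℝ) (x : EuclideanSpace ℝ (Fin q)) :
    (x : EuclideanSpace ℝ (Fin q)) ⬝ᵥ (Bᵀ * B).mulVec x = ‖Matrix.toEuclideanLin B x‖ ^ 2 := by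
  rw [EuclideanSpace.real_norm_sq_eq, ← Matrix.mulVec_mulVec, Matrix.dotProduct_mulVec, Matrix.vecMul_transpose]
  simp [dotProduct, pow_two, Matrix.toLpLin_apply]

lemma acg_det (B : Matrix (Fin q) (Fin q) ℝ) : LinearMap.det (Matrix.toEuclideanLin B) = B.det := by
  rw [Matrix.toEuclideanLin_eq_toLin, LinearMap.det_toLin]

lemma acg_vol (B : Matrix (Fin q) (Fin q) ℝ) (hB : B.det ≠ 0) :
    volume {x : EuclideanSpace ℝ (Fin q) | ‖Matrix.toEuclideanLin B x‖ < 1} =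
     ENNReal.ofReal |B.det|⁻¹ * volume (ball (0:EuclideanSpace ℝ (Fin q)) 1) := by
  have := Measure.addHaar_preimage_linearMap (volume : Measure (EuclideanSpace ℝ (Fin q)))
    (f := Matrix.toEuclideanLin B) (by rwa [acg_det]) (ball 0 1)
  rw [acg_det, abs_inv] at this
  rw [← this]; congr 1; ext x; simp

lemma acg_polar (hq : 2 ≤ q) (B : Matrix (Fin q) (Fin q) ℝ) (hB : ∀ x : EuclideanSpace ℝ (Fin q), x ≠ 0 → 0 < ‖Matrix.toEuclideanLin B x‖) :
    (q:ENNReal) * volume {x : EuclideanSpace ℝ (Fin q) | ‖Matrix.toEuclideanLin B x‖ < 1} =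
    ∫⁻ x : sphere (0 : EuclideanSpace ℝ (Fin q)) 1, ENNReal.ofReal (‖Matrix.toEuclideanLin B x‖⁻¹ ^ q) ∂(volume : Measure (EuclideanSpace ℝ (Fin q))).toSphere := by
  have : Nontrivial (EuclideanSpace ℝ (Fin q)) := Module.nontrivial_of_finrank_pos (R := ℝ) (by simp; omega)
  set L := Matrix.toEuclideanLin B
  have hL : Continuous fun x => L x := L.continuous_of_finiteDimensional
  set T : Set (sphere (0 : EuclideanSpace ℝ (Fin q)) 1 × Set.Ioi (0:ℝ)) := {p | p.2.1 * ‖L p.1‖ < 1}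
  have hT : MeasurableSet T := by
    apply IsOpen.measurableSet
    apply isOpen_lt <;> fun_prop
  have key := (volume : Measure (EuclideanSpace ℝ (Fin q))).measurePreserving_homeomorphUnitSphereProd.measure_preimage hT.nullMeasurableSet
  have e1 : (Measure.comap (Subtype.val : ({0}ᶜ : Set (EuclideanSpace ℝ (Fin q))) → _) volume)
      ((homeomorphUnitSphereProd (EuclideanSpace ℝ (Fin q))) ⁻¹' T) = volume {x : EuclideanSpace ℝ (Fin q) | ‖L x‖ < 1} := by
    rw [comap_subtype_coe_apply (measurableSet_singleton _).compl]
    have : Subtype.val '' ((homeomorphUnitSphereProd (EuclideanSpace ℝ (Fin q))) ⁻¹' T) = {x | ‖L x‖ < 1} \ {0} := by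
      ext x
      simp only [Set.mem_image, Set.mem_preimage, Subtype.exists, Set.mem_diff, T, Set.mem_setOf_eq]
      constructor
      · rintro ⟨a, ha, h, rfl⟩
        refine ⟨?_, ha⟩
        simpa [norm_smul, ← mul_assoc, mul_inv_cancel₀ (norm_ne_zero_iff.2 ha)] using h
      · rintro ⟨h, hx⟩
        refine ⟨x, hx, ?_, rfl⟩
        have hx' : x ≠ 0 := hx
        simpa [norm_smul, ← mul_assoc, mul_inv_cancel₀ (norm_ne_zero_iff.2 hx')] using h
    rw [this, measure_diff_null (by simp)]
  rw [e1] at key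
  rw [key, Measure.prod_apply hT, ← lintegral_const_mul _ (measurable_measure_prodMk_left hT)]
  refine lintegral_congr fun x => ?_
  have hx0 : (x : EuclideanSpace ℝ (Fin q)) ≠ 0 := ne_zero_of_mem_unit_sphere x
  have hp := hB x hx0
  have : Prod.mk x ⁻¹' T = Set.Iio (⟨‖L x‖⁻¹, inv_pos.2 hp⟩ : Set.Ioi (0:ℝ)) := by
    ext r
    simp only [Set.mem_preimage, T, Set.mem_setOf_eq, Set.mem_Iio, ← Subtype.coe_lt_coe]
    rw [← one_div, lt_div_iff₀ hp]
  rw [this, Measure.volumeIoiPow_apply_Iio]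
  have hq1 : q - 1 + 1 = q := by omega
  have hq2 : ((q - 1 : ℕ) : ℝ) + 1 = q := by exact_mod_cast hq1
  simp only [finrank_euclideanSpace, Fintype.card_fin, hq1, hq2]
  rw [← ENNReal.ofReal_natCast, ← ENNReal.ofReal_mul (by positivity)]
  congr 1
  have : (q:ℝ) ≠ 0 := by positivity
  field_simp

end

theorem stmt_14 (q : ℕ) (hq : 2 ≤ q)
    (Ω : Matrix (Fin q) (Fin q) ℝ) (hΩsymm : Ω.IsSymm) (hΩ : Ω.PosDef)
    (σ : Measure (sphere (0 : EuclideanSpace ℝ (Fin q)) 1))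
    (hσ : σ = ((volume : Measure (EuclideanSpace ℝ (Fin q))).toSphere Set.univ)⁻¹ •
      (volume : Measure (EuclideanSpace ℝ (Fin q))).toSphere) :
    (∫ x : sphere (0 : EuclideanSpace ℝ (Fin q)) 1,
        ((x : EuclideanSpace ℝ (Fin q)) ⬝ᵥ Ω.mulVec (x : EuclideanSpace ℝ (Fin q)))
          ^ (-((q : ℝ) / 2)) ∂σ) = Ω.det ^ (-(1 : ℝ) / 2) ∧
    (∫ x : sphere (0 : EuclideanSpace ℝ (Fin q)) 1,
        Ω.det ^ ((1 : ℝ) / 2) *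
          ((x : EuclideanSpace ℝ (Fin q)) ⬝ᵥ Ω.mulVec (x : EuclideanSpace ℝ (Fin q)))
            ^ (-((q : ℝ) / 2)) ∂σ) = 1 := by
  have hd := hΩ.det_pos
  have main : (∫ x : sphere (0 : EuclideanSpace ℝ (Fin q)) 1,
        ((x : EuclideanSpace ℝ (Fin q)) ⬝ᵥ Ω.mulVec (x : EuclideanSpace ℝ (Fin q)))
          ^ (-((q : ℝ) / 2)) ∂σ) = Ω.det ^ (-(1 : ℝ) / 2) := by
    obtain ⟨B, rfl⟩ := acg_exists Ω hΩ
    have hdet : (Bᵀ * B).det = |B.det| ^ 2 := by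
      rw [det_mul, det_transpose, sq_abs, sq]
    have hB : B.det ≠ 0 := by
      intro h; rw [hdet, h] at hd; simp at hd
    have hpos : ∀ x : EuclideanSpace ℝ (Fin q), x ≠ 0 → 0 < ‖Matrix.toEuclideanLin B x‖ := by
      intro x hx
      rw [norm_pos_iff]
      intro h
      have h1 := acg_norm B x
      rw [h] at h1
      have h2 := hΩ.dotProduct_mulVec_pos (x := WithLp.ofLp x) (by simpa using hx)
      simp at h1 h2
      simp [h1] at h2
    have hL : Continuous fun x => Matrix.toEuclideanLin B x :=
      (Matrix.toEuclideanLin B).continuous_of_finiteDimensional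
    have h2 : ∀ t : ℝ, 0 < t → (t ^ 2) ^ (-((q : ℝ) / 2)) = t⁻¹ ^ q := by
      intro t ht
      rw [← Real.rpow_natCast t 2, ← Real.rpow_mul ht.le, inv_pow, ← Real.rpow_natCast t q, ← Real.rpow_neg ht.le]
      congr 1; push_cast; ring
    have hcongr : ∀ x : sphere (0 : EuclideanSpace ℝ (Fin q)) 1,
        ((x : EuclideanSpace ℝ (Fin q)) ⬝ᵥ (Bᵀ * B).mulVec (x : EuclideanSpace ℝ (Fin q)))
          ^ (-((q : ℝ) / 2)) = ‖Matrix.toEuclideanLin B x‖⁻¹ ^ q := by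
      intro x
      rw [acg_norm, h2 _ (hpos _ (ne_zero_of_mem_unit_sphere x))]
    simp_rw [hcongr]
    rw [integral_eq_lintegral_of_nonneg_ae (.of_forall fun x => by positivity)
      (Measurable.aestronglyMeasurable (by fun_prop)), hσ, lintegral_smul_measure, ← acg_polar hq B hpos,
      acg_vol B hB, Measure.toSphere_apply_univ, hdet]
    have hb0 : volume (ball (0:EuclideanSpace ℝ (Fin q)) 1) ≠ 0 := (measure_ball_pos _ _ one_pos).ne'
    have hb1 : volume (ball (0:EuclideanSpace ℝ (Fin q)) 1) ≠ ⊤ := measure_ball_lt_top.ne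
    have hb2 : (volume (ball (0:EuclideanSpace ℝ (Fin q)) 1)).toReal ≠ 0 := ENNReal.toReal_ne_zero.2 ⟨hb0, hb1⟩
    have hq0 : (q:ℝ) ≠ 0 := by positivity
    have ha : 0 < |B.det| := abs_pos.2 hB
    have h3 : (|B.det| ^ 2) ^ (-(1:ℝ) / 2) = |B.det|⁻¹ := by
      rw [← Real.rpow_natCast _ 2, ← Real.rpow_mul ha.le, ← Real.rpow_neg_one]
      congr 1; norm_num
    rw [h3]
    simp only [finrank_euclideanSpace, Fintype.card_fin, smul_eq_mul, ENNReal.toReal_mul, ENNReal.toReal_inv, ENNReal.toReal_natCast]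
    rw [ENNReal.toReal_ofReal (by positivity)]
    field_simp
  refine ⟨main, ?_⟩
  rw [integral_const_mul, main, ← Real.rpow_add hd]
  norm_num
end
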